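/- Assume F and G admit moduli of strong convexity γ₁ > 0 and γ₂ > 0, and that a saddle point (x*, y*) exists; it is then the unique saddle point. Then any strongly convex accelerated Douglas–Rachford iteration (with parameters σ, τ > 0, σγ₁ = τγ₂, 0 < γ ≤ 2γ₁/(1 + (1 + 2σγ₁)στ‖K‖²), ϑ = 1/(1+σγ)) converges R-linearly: xᵏ → x* and yᵏ → y* strongly with ‖xᵏ − x*‖² = o(ϑᵏ) and ‖yᵏ − y*‖² = o(ϑᵏ) (i.e. ϑ⁻ᵏ‖xᵏ − x*‖² → 0 and ϑ⁻ᵏ‖yᵏ − y*‖² → 0). Furthermore, with x̄* = x* − σK*y* and ȳ* = y* + τKx*, one has x̄ᵏ → x̄* and ȳᵏ → ȳ* with ‖x̄ᵏ − x̄*‖² = o(ϑᵏ) and ‖ȳᵏ − ȳ*‖² = o(ϑᵏ). -/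

import Mathlib

/-! The iteration is affine apart from the two subgradient inclusions, so all vectors can be
measured from the saddle point. Write `a, b` for the centred `x̄ᵏ, ȳᵏ`, `p, q` for the centred
`xᵏ⁺¹, yᵏ⁺¹`, `a', b'` for the centred `x̄ᵏ⁺¹, ȳᵏ⁺¹`, and put `μ = σγ₁ = τγ₂`, `α = σγ`,
`M = στ‖K‖²`, `N = ‖a‖²/σ + ‖b‖²/τ`, and `N'` for the same expression in `a', b'`.

Strong monotonicity of `∂F` and `∂G` gives `⟪a - p, p⟫ ≥ μ‖p‖²` and `⟪b - q, q⟫ ≥ μ‖q‖²`. When these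
are inserted into `N - (1 + α) N'`, all cross terms involving `K` cancel because `K` and `K*` are
adjoint and `(1 + α)θ = 1`. What remains is bounded below, by Young's inequality with parameter `2μ`
and the hypothesis `α(1 + (1 + 2μ)M) ≤ 2μ`, giving (`descent`)
`N - (1 + α) N' ≥ (1 - θ²)(‖a' - a‖²/σ + ‖b' - b‖²/τ)`.
Since `N` exceeds `(1 + α/2) N'` by at most a multiple of the bracket on the right (`sq_le_step`), this
self-improves to `N' ≤ ρ N` with some `ρ < θ` (`contraction`), which is stronger than
`N = o(θᵏ)`. The iterates `p, q` inherit the rate because `‖p‖ ≤ ‖a‖` and `‖q‖ ≤ ‖b‖`. -/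

open scoped RealInnerProductSpace
open Filter

noncomputable section

variable {X Y : Type*} [NormedAddCommGroup X] [InnerProductSpace ℝ X] [CompleteSpace X]
  [NormedAddCommGroup Y] [InnerProductSpace ℝ Y] [CompleteSpace Y]

/-- The convex subdifferential of an extended-real-valued functional. -/
def ediff (F : X → EReal) (x : X) : Set X :=
  {ξ : X | ∀ z : X, F x + ((⟪ξ, z - x⟫ : ℝ) : EReal) ≤ F z}

/-- The effective domain. -/
def edom (F : X → EReal) : Set X := {x : X | F x ≠ ⊤}

/-- Properness: nowhere `⊥` and somewhere finite. -/
def Proper (F : X → EReal) : Prop := (∀ x, F x ≠ ⊥) ∧ ∃ x, F x ≠ ⊤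

/-- `F` admits `γ` as a modulus of strong convexity. -/
def StrongModulus (F : X → EReal) (γ : ℝ) : Prop :=
  ∀ x z : X, ∀ l : ℝ, 0 ≤ l → l ≤ 1 →
    F (l • x + (1 - l) • z) + ((γ * l * (1 - l) * ‖x - z‖ ^ 2 / 2 : ℝ) : EReal) ≤
      (l : EReal) * F x + ((1 - l : ℝ) : EReal) * F z

/-- Saddle points of the Lagrangian `L(x,y) = ⟪Kx, y⟫ + F(x) - G(y)`. -/
def IsSaddle (K : X →L[ℝ] Y) (F : X → EReal) (G : Y → EReal) (xs : X) (ys : Y) : Prop :=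
  xs ∈ edom F ∧ ys ∈ edom G ∧
    (-(ContinuousLinearMap.adjoint K) ys) ∈ ediff F xs ∧ K xs ∈ ediff G ys

/-- The accelerated Douglas--Rachford iteration for strongly convex-concave saddle-point
problems, with relaxation parameter `θ`. -/
def IsADRsc (K : X →L[ℝ] Y) (F : X → EReal) (G : Y → EReal) (σ τ θ : ℝ)
    (u : ℕ → X) (v : ℕ → Y) (ub : ℕ → X) (vb : ℕ → Y) : Prop :=
  ∀ k : ℕ,
    σ⁻¹ • (ub k - u (k+1)) ∈ ediff F (u (k+1)) ∧
    τ⁻¹ • (vb k - v (k+1)) ∈ ediff G (v (k+1)) ∧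
    ub (k+1) = u (k+1) - σ • (ContinuousLinearMap.adjoint K) (v (k+1) + θ • (vb (k+1) - vb k)) ∧
    vb (k+1) = v (k+1) + τ • K (u (k+1) + θ • (ub (k+1) - ub k))

/-- A subgradient of a strongly convex functional supports it up to a quadratic. -/
lemma ediff_growth {H : Type*} [NormedAddCommGroup H] [InnerProductSpace ℝ H]
    {F : H → EReal} {g : ℝ} (hF : StrongModulus F g) {x z ξ : H} (hξ : ξ ∈ ediff F x)
    {f f' : ℝ} (hf : F x = f) (hf' : F z = f') :
    f + ⟪ξ, z - x⟫ + g / 2 * ‖z - x‖ ^ 2 ≤ f' := by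
  have key : ∀ l ∈ Set.Ioo (0 : ℝ) 1,
      f + ⟪ξ, z - x⟫ + (1 - l) * (g / 2 * ‖z - x‖ ^ 2) ≤ f' := by
    rintro l ⟨h0, h1⟩
    have h2 := hF z x l h0.le h1.le
    have h3 := hξ (l • z + (1 - l) • x)
    have h4 : l • z + (1 - l) • x - x = l • (z - x) := by module
    rw [h4, inner_smul_right, hf] at h3
    rw [hf, hf'] at h2
    have h5 := (add_le_add_left h3
      ((g * l * (1 - l) * ‖z - x‖ ^ 2 / 2 : ℝ) : EReal)).trans h2
    have h6 : f + l * ⟪ξ, z - x⟫ + g * l * (1 - l) * ‖z - x‖ ^ 2 / 2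
        ≤ l * f' + (1 - l) * f := by exact_mod_cast h5
    have h7 : l * (f + ⟪ξ, z - x⟫ + (1 - l) * (g / 2 * ‖z - x‖ ^ 2)) ≤ l * f' := by
      linarith
    exact le_of_mul_le_mul_left h7 h0
  have hlim : Tendsto (fun l : ℝ => f + ⟪ξ, z - x⟫ + (1 - l) * (g / 2 * ‖z - x‖ ^ 2))
      (nhdsWithin 0 (Set.Ioi 0)) (nhds (f + ⟪ξ, z - x⟫ + (1 - 0) * (g / 2 * ‖z - x‖ ^ 2))) := by
    refine (Continuous.tendsto ?_ 0).mono_left nhdsWithin_le_nhds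
    fun_prop
  have := le_of_tendsto hlim
    (Filter.mem_of_superset (Ioo_mem_nhdsGT (zero_lt_one (α := ℝ))) key)
  simpa using this

/-- The subdifferential of a strongly convex functional is strongly monotone. -/
lemma ediff_strong_mono {H : Type*} [NormedAddCommGroup H] [InnerProductSpace ℝ H]
    {F : H → EReal} (hp : Proper F) {g : ℝ} (hF : StrongModulus F g) {x z ξ ζ : H}
    (hξ : ξ ∈ ediff F x) (hζ : ζ ∈ ediff F z) :
    g * ‖x - z‖ ^ 2 ≤ ⟪ξ - ζ, x - z⟫ := by
  -- a functional that is finite somewhere is finite wherever it has a subgradient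
  have fin : ∀ {y η : H}, η ∈ ediff F y → ∃ f : ℝ, F y = f := by
    intro y η hη
    obtain ⟨w, hw⟩ := hp.2
    refine ⟨(F y).toReal, (EReal.coe_toReal (fun h => hw ?_) (hp.1 y)).symm⟩
    have := hη w
    rw [h, EReal.top_add_coe] at this
    exact top_le_iff.1 this
  obtain ⟨f, hf⟩ := fin hξ
  obtain ⟨f', hf'⟩ := fin hζ
  have h1 := ediff_growth hF hξ hf hf'
  have h2 := ediff_growth hF hζ hf' hf
  have h3 : ⟪ξ, z - x⟫ = -⟪ξ, x - z⟫ := by rw [← inner_neg_right, neg_sub]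
  rw [inner_sub_left]
  rw [norm_sub_rev z x] at h1
  linarith

/-- Young's inequality with parameter `2 * μ`, in the form used on both sides of `descent`: `s` is
`K (w + θ • d)` or its analogue for the adjoint, and `n = ‖K‖`. -/
lemma young_bound {H H' : Type*} [NormedAddCommGroup H] [InnerProductSpace ℝ H]
    [NormedAddCommGroup H'] {c μ α θ n : ℝ} (hc : 0 ≤ c) (hμ : 0 < μ) (hα : 0 < α)
    (hα' : α * (1 + (1 + 2 * μ) * (c * n ^ 2)) ≤ 2 * μ) {w d : H} {s : H'}
    (hs : ‖s‖ ^ 2 ≤ n ^ 2 * ‖w + θ • d‖ ^ 2) :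
    α * (c * ‖s‖ ^ 2) ≤ (2 * μ - α) * ‖w‖ ^ 2 + θ ^ 2 * ‖d‖ ^ 2 := by
  have h1 : 2 * μ * ‖w + θ • d‖ ^ 2
      ≤ (1 + 2 * μ) * (2 * μ * ‖w‖ ^ 2 + θ ^ 2 * ‖d‖ ^ 2) := by
    have h := sq_nonneg ‖(2 * μ) • w - θ • d‖
    simp only [← real_inner_self_eq_norm_sq, inner_sub_left, inner_sub_right, inner_add_left,
      inner_add_right, inner_smul_left, inner_smul_right, real_inner_comm d w,
      RCLike.conj_to_real] at h ⊢
    linarith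
  have h2 : 2 * μ * (α * (c * ‖s‖ ^ 2)) ≤ α * c * n ^ 2 * (2 * μ * ‖w + θ • d‖ ^ 2) := by
    have := mul_le_mul_of_nonneg_left hs (show 0 ≤ 2 * μ * α * c by positivity)
    linarith
  have h3 := mul_le_mul_of_nonneg_left h1 (show 0 ≤ α * c * n ^ 2 by positivity)
  have h4 := mul_le_mul_of_nonneg_right hα'
    (show 0 ≤ 2 * μ * ‖w‖ ^ 2 + θ ^ 2 * ‖d‖ ^ 2 by positivity)
  have h5 : 0 ≤ α * (θ ^ 2 * ‖d‖ ^ 2) := by positivity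
  have h6 : 2 * μ * (α * (c * ‖s‖ ^ 2))
      ≤ 2 * μ * ((2 * μ - α) * ‖w‖ ^ 2 + θ ^ 2 * ‖d‖ ^ 2) := by linarith
  exact le_of_mul_le_mul_left h6 (by positivity)

/-- One step of the centred iteration: weighted by `1 + α = 1/θ`, the energy drops by a multiple
of the squared step length. -/
lemma descent (K : X →L[ℝ] Y) {σ τ μ α θ : ℝ} (hσ : 0 < σ) (hτ : 0 < τ) (hμ : 0 < μ)
    (hα : 0 < α) (hθ : (1 + α) * θ = 1)
    (hα' : α * (1 + (1 + 2 * μ) * (σ * τ * ‖K‖ ^ 2)) ≤ 2 * μ)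
    {a p a' : X} {b q b' : Y}
    (hp : μ * ‖p‖ ^ 2 ≤ ⟪a - p, p⟫) (hq : μ * ‖q‖ ^ 2 ≤ ⟪b - q, q⟫)
    (ha : a' = p - σ • (ContinuousLinearMap.adjoint K) (q + θ • (b' - b)))
    (hb : b' = q + τ • K (p + θ • (a' - a))) :
    (1 + α) * (‖a'‖ ^ 2 / σ + ‖b'‖ ^ 2 / τ)
      + (1 - θ ^ 2) * (‖a' - a‖ ^ 2 / σ + ‖b' - b‖ ^ 2 / τ)
      ≤ ‖a‖ ^ 2 / σ + ‖b‖ ^ 2 / τ := by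
  obtain ⟨d, hd⟩ : ∃ d, d = a' - a := ⟨_, rfl⟩
  obtain ⟨e, he⟩ : ∃ e, e = b' - b := ⟨_, rfl⟩
  rw [← hd] at hb
  rw [← he] at ha
  rw [← hd, ← he]
  obtain ⟨S, hS⟩ : ∃ S, S = (ContinuousLinearMap.adjoint K) (q + θ • e) := ⟨_, rfl⟩
  obtain ⟨R, hR⟩ : ∃ R, R = K (p + θ • d) := ⟨_, rfl⟩
  rw [← hS] at ha
  rw [← hR] at hb
  have hadj : ⟪S, p⟫ + θ * ⟪S, d⟫ = ⟪R, q⟫ + θ * ⟪R, e⟫ := by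
    have : ⟪S, p + θ • d⟫ = ⟪R, q + θ • e⟫ := by
      rw [hS, hR, ContinuousLinearMap.adjoint_inner_left, real_inner_comm]
    simpa [inner_add_right, inner_smul_right] using this
  have hSn : ‖S‖ ^ 2 ≤ ‖K‖ ^ 2 * ‖q + θ • e‖ ^ 2 := by
    rw [← mul_pow, hS]
    gcongr
    simpa using (ContinuousLinearMap.adjoint K).le_opNorm (q + θ • e)
  have hRn : ‖R‖ ^ 2 ≤ ‖K‖ ^ 2 * ‖p + θ • d‖ ^ 2 := by
    rw [← mul_pow, hR]
    gcongr
    exact K.le_opNorm _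
  have hSy := young_bound (c := σ * τ) (by positivity) hμ hα hα' hSn
  have hRy := young_bound (c := σ * τ) (by positivity) hμ hα hα' hRn
  have hX : 2 * ((1 + α) * ⟪S, p⟫ + ⟪S, d⟫)
      + ((2 * μ - α) * ‖p‖ ^ 2 + θ ^ 2 * ‖d‖ ^ 2) / σ - α * σ * ‖S‖ ^ 2
      ≤ (‖a‖ ^ 2 - (1 + α) * ‖a'‖ ^ 2 - (1 - θ ^ 2) * ‖d‖ ^ 2) / σ := by
    have haa : a = p - σ • S - d := by rw [hd, ← ha]; abel
    rw [le_div_iff₀ hσ, sub_mul, add_mul, div_mul_cancel₀ _ hσ.ne']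
    rw [haa] at hp ⊢
    rw [ha]
    simp only [← real_inner_self_eq_norm_sq, inner_sub_left, inner_sub_right, inner_smul_left,
      inner_smul_right, real_inner_comm S, real_inner_comm d p, RCLike.conj_to_real] at hp ⊢
    linarith
  have hY : -2 * ((1 + α) * ⟪R, q⟫ + ⟪R, e⟫)
      + ((2 * μ - α) * ‖q‖ ^ 2 + θ ^ 2 * ‖e‖ ^ 2) / τ - α * τ * ‖R‖ ^ 2
      ≤ (‖b‖ ^ 2 - (1 + α) * ‖b'‖ ^ 2 - (1 - θ ^ 2) * ‖e‖ ^ 2) / τ := by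
    have hbb : b = q + τ • R - e := by rw [he, ← hb]; abel
    rw [le_div_iff₀ hτ, sub_mul, add_mul, div_mul_cancel₀ _ hτ.ne']
    rw [hbb] at hq ⊢
    rw [hb]
    simp only [← real_inner_self_eq_norm_sq, inner_sub_left, inner_sub_right, inner_add_left,
      inner_add_right, inner_smul_left,
      inner_smul_right, real_inner_comm R, real_inner_comm e q, RCLike.conj_to_real] at hq ⊢
    linarith
  have hS' : α * σ * ‖S‖ ^ 2 ≤ ((2 * μ - α) * ‖q‖ ^ 2 + θ ^ 2 * ‖e‖ ^ 2) / τ := by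
    rw [le_div_iff₀ hτ]; linarith
  have hR' : α * τ * ‖R‖ ^ 2 ≤ ((2 * μ - α) * ‖p‖ ^ 2 + θ ^ 2 * ‖d‖ ^ 2) / σ := by
    rw [le_div_iff₀ hσ]; linarith
  -- the adjoint relation `hadj`, scaled by `1 + α = 1 / θ`
  have hadj' : (1 + α) * ⟪S, p⟫ + ⟪S, d⟫ = (1 + α) * ⟪R, q⟫ + ⟪R, e⟫ := by
    linear_combination (1 + α) * hadj - (⟪S, d⟫ - ⟪R, e⟫) * hθ
  simp only [div_eq_mul_inv] at hX hY hS' hR' ⊢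
  linarith

/-- The weighted bound `‖x‖² ≤ (1 + t)‖y‖² + (1 + 1/t)‖y - x‖²` for `t = α / 2`, cleared of
denominators. -/
lemma sq_le_step {H : Type*} [NormedAddCommGroup H] [InnerProductSpace ℝ H] (α : ℝ)
    (x y : H) :
    α * ‖x‖ ^ 2 ≤ α * (1 + α / 2) * ‖y‖ ^ 2 + (2 + α) * ‖y - x‖ ^ 2 := by
  have h := sq_nonneg ‖α • y + (2 : ℝ) • (y - x)‖
  obtain ⟨d, rfl⟩ : ∃ d, x = y - d := ⟨y - x, by abel⟩
  rw [sub_sub_cancel] at h ⊢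
  simp only [← real_inner_self_eq_norm_sq, inner_sub_left, inner_sub_right, inner_add_left,
    inner_add_right, inner_smul_left, inner_smul_right, real_inner_comm d y,
    RCLike.conj_to_real] at h ⊢
  linarith

/-- If the energy `N` drops as in `descent` (with step energy `D`, so that `N ≤ (1 + α / 2) N'` up
to a multiple of `D`), then it contracts at a rate strictly better than `1 / (1 + α)`. The rate
comes from eliminating `D` between the two inequalities, where
`(1 - θ²) α / (2 + α) = (1 - θ)²`. -/
lemma contraction {α θ : ℝ} (hα : 0 < α) (hθ0 : 0 < θ) (hθ : (1 + α) * θ = 1) :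
    ∃ ρ : ℝ, 0 ≤ ρ ∧ ρ < θ ∧ ∀ N N' D : ℝ,
      (1 + α) * N' + (1 - θ ^ 2) * D ≤ N →
      α * N ≤ α * (1 + α / 2) * N' + (2 + α) * D → N' ≤ ρ * N := by
  have hθ1 : θ < 1 := by nlinarith
  have hκ : (1 - θ) ^ 2 < 1 := by nlinarith
  have hκ0 : 0 < (1 - θ) ^ 2 := pow_pos (by linarith) 2
  have hden : 0 < 1 + α - (1 - θ) ^ 2 * (1 + α / 2) := by nlinarith
  refine ⟨(1 - (1 - θ) ^ 2) / (1 + α - (1 - θ) ^ 2 * (1 + α / 2)), ?_, ?_, ?_⟩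
  · exact div_nonneg (by linarith) hden.le
  · rw [div_lt_iff₀ hden]
    have : (1 - θ) ^ 2 * (1 + α / 2) * θ < (1 - θ) ^ 2 * 1 := by
      rw [mul_assoc]
      exact mul_lt_mul_of_pos_left (by nlinarith) hκ0
    nlinarith
  · intro N N' D h1 h2
    have h3 : (1 - θ ^ 2) * α = (1 - θ) ^ 2 * (2 + α) := by
      obtain rfl : α = (1 - θ) / θ := by field_simp; linarith
      field_simp; ring
    rw [div_mul_eq_mul_div, le_div_iff₀ hden]
    have h4 := mul_le_mul_of_nonneg_left h2 (show 0 ≤ 1 - θ ^ 2 by nlinarith)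
    have h5 : (1 - θ) ^ 2 * (2 + α) * N
        ≤ (1 - θ) ^ 2 * (2 + α) * (1 + α / 2) * N' + (2 + α) * ((1 - θ ^ 2) * D) := by
      rw [← h3]; linarith
    have h6 : (2 + α) * ((1 - θ) ^ 2 * N)
        ≤ (2 + α) * ((1 - θ) ^ 2 * (1 + α / 2) * N' + (1 - θ ^ 2) * D) := by linarith
    have h7 := le_of_mul_le_mul_left h6 (by positivity)
    linarith

lemma tendsto_of_div_pow {H : Type*} [NormedAddCommGroup H] {θ : ℝ} (h0 : 0 < θ) (h1 : θ ≤ 1)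
    {w : ℕ → H} {w' : H} (h : Tendsto (fun k => ‖w k - w'‖ ^ 2 / θ ^ k) atTop (nhds 0)) :
    Tendsto w atTop (nhds w') := by
  rw [tendsto_iff_norm_sub_tendsto_zero]
  have h2 : Tendsto (fun k => ‖w k - w'‖ ^ 2) atTop (nhds 0) := by
    refine squeeze_zero (fun k => by positivity) (fun k => ?_) h
    exact le_div_self (by positivity) (by positivity) (pow_le_one₀ h0.le h1)
  have h3 := h2.sqrt
  simpa [Real.sqrt_sq] using h3

lemma tendsto_div_pow_of_le {r C ρ θ : ℝ} (hρ : 0 ≤ ρ) (hρθ : ρ < θ) {s : ℕ → ℝ}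
    (h0 : ∀ k, 0 ≤ s k) (h : ∀ k, s k ≤ C * (ρ ^ k * r)) :
    Tendsto (fun k => s k / θ ^ k) atTop (nhds 0) := by
  have hθ : 0 < θ := hρ.trans_lt hρθ
  have h1 : Tendsto (fun k => C * r * (ρ / θ) ^ k) atTop (nhds 0) := by
    simpa using (tendsto_pow_atTop_nhds_zero_of_lt_one (div_nonneg hρ hθ.le)
      ((div_lt_one hθ).2 hρθ)).const_mul (C * r)
  refine squeeze_zero (fun k => div_nonneg (h0 k) (by positivity)) (fun k => ?_) h1
  rw [div_pow, mul_div_assoc', div_le_div_iff_of_pos_right (by positivity)]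
  linarith [h k]

/-- The rate of `w` passes to an iterate that is dominated by `w` with a shift of one index. -/
lemma tendsto_div_pow_shift {H : Type*} [NormedAddCommGroup H] {θ : ℝ} (h0 : 0 < θ)
    {z w : ℕ → H} {z' w' : H} (hzw : ∀ k, ‖z (k + 1) - z'‖ ≤ ‖w k - w'‖)
    (h : Tendsto (fun k => ‖w k - w'‖ ^ 2 / θ ^ k) atTop (nhds 0)) :
    Tendsto (fun k => ‖z k - z'‖ ^ 2 / θ ^ k) atTop (nhds 0) := by
  rw [← tendsto_add_atTop_iff_nat 1]
  have h1 : Tendsto (fun k => ‖w k - w'‖ ^ 2 / θ ^ k / θ) atTop (nhds 0) := by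
    simpa using h.div_const θ
  refine squeeze_zero (fun k => by positivity) (fun k => ?_) h1
  rw [div_div, ← pow_succ]
  gcongr
  exact hzw k

lemma norm_le_of_mono {H : Type*} [NormedAddCommGroup H] [InnerProductSpace ℝ H] {μ : ℝ}
    (hμ : 0 ≤ μ) {a p : H} (h : μ * ‖p‖ ^ 2 ≤ ⟪a - p, p⟫) : ‖p‖ ≤ ‖a‖ := by
  rw [inner_sub_left, real_inner_self_eq_norm_sq] at h
  have h1 := real_inner_le_norm a p
  have h2 : 0 ≤ μ * ‖p‖ ^ 2 := by positivity
  by_contra! hlt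
  nlinarith [norm_nonneg a, norm_nonneg p]

/-- Theorem: R-linear convergence of the accelerated Douglas--Rachford
iteration for strongly convex-concave saddle-point problems. -/
theorem statement19
    (F : X → EReal) (G : Y → EReal) (K : X →L[ℝ] Y)
    (hFp : Proper F) (hFl : LowerSemicontinuous F)
    (hGp : Proper G) (hGl : LowerSemicontinuous G)
    (γ₁ γ₂ : ℝ) (hγ₁ : 0 < γ₁) (hγ₂ : 0 < γ₂)
    (hF : StrongModulus F γ₁) (hG : StrongModulus G γ₂)
    (xs : X) (ys : Y) (hsaddle : IsSaddle K F G xs ys)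
    (σ τ : ℝ) (hσ : 0 < σ) (hτ : 0 < τ) (hστ : σ * γ₁ = τ * γ₂)
    (γ : ℝ) (hγ0 : 0 < γ)
    (hγ : γ ≤ 2 * γ₁ / (1 + (1 + 2 * σ * γ₁) * σ * τ * ‖K‖ ^ 2))
    (θ : ℝ) (hθ : θ = 1 / (1 + σ * γ))
    (u : ℕ → X) (v : ℕ → Y) (ub : ℕ → X) (vb : ℕ → Y)
    (hiter : IsADRsc K F G σ τ θ u v ub vb) :
    (∀ x' : X, ∀ y' : Y, IsSaddle K F G x' y' → x' = xs ∧ y' = ys) ∧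
    Tendsto u atTop (nhds xs) ∧ Tendsto v atTop (nhds ys) ∧
    Tendsto (fun k : ℕ => ‖u k - xs‖ ^ 2 / θ ^ k) atTop (nhds 0) ∧
    Tendsto (fun k : ℕ => ‖v k - ys‖ ^ 2 / θ ^ k) atTop (nhds 0) ∧
    Tendsto ub atTop (nhds (xs - σ • (ContinuousLinearMap.adjoint K) ys)) ∧
    Tendsto vb atTop (nhds (ys + τ • K xs)) ∧
    Tendsto (fun k : ℕ =>
      ‖ub k - (xs - σ • (ContinuousLinearMap.adjoint K) ys)‖ ^ 2 / θ ^ k) atTop (nhds 0) ∧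
    Tendsto (fun k : ℕ => ‖vb k - (ys + τ • K xs)‖ ^ 2 / θ ^ k) atTop (nhds 0) := by
  obtain ⟨-, -, hξ, hζ⟩ := hsaddle
  have hα : 0 < σ * γ := by positivity
  have hθ0 : 0 < θ := by rw [hθ]; positivity
  have hθ1 : (1 + σ * γ) * θ = 1 := by rw [hθ]; field_simp
  have hθle : θ ≤ 1 := by nlinarith
  have hμ : 0 < σ * γ₁ := by positivity
  have hα' : σ * γ * (1 + (1 + 2 * (σ * γ₁)) * (σ * τ * ‖K‖ ^ 2)) ≤ 2 * (σ * γ₁) := by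
    rw [le_div_iff₀ (by positivity)] at hγ
    have := mul_le_mul_of_nonneg_left hγ hσ.le
    linarith
  have huniq : ∀ x' : X, ∀ y' : Y, IsSaddle K F G x' y' → x' = xs ∧ y' = ys := by
    rintro x' y' ⟨-, -, hξ', hζ'⟩
    have h1 := ediff_strong_mono hFp hF hξ' hξ
    have h2 := ediff_strong_mono hGp hG hζ' hζ
    have h3 : ⟪-(ContinuousLinearMap.adjoint K) y' - -(ContinuousLinearMap.adjoint K) ys,
        x' - xs⟫ = -⟪K x' - K xs, y' - ys⟫ := by
      rw [show -(ContinuousLinearMap.adjoint K) y' - -(ContinuousLinearMap.adjoint K) ys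
        = -(ContinuousLinearMap.adjoint K) (y' - ys) by rw [map_sub]; abel,
        inner_neg_left, ContinuousLinearMap.adjoint_inner_left, map_sub, real_inner_comm]
    rw [h3] at h1
    have h4 : 0 ≤ γ₁ * ‖x' - xs‖ ^ 2 := by positivity
    have h5 : 0 ≤ γ₂ * ‖y' - ys‖ ^ 2 := by positivity
    have h6 : γ₁ * ‖x' - xs‖ ^ 2 = 0 := by linarith
    have h7 : γ₂ * ‖y' - ys‖ ^ 2 = 0 := by linarith
    simpa [hγ₁.ne', hγ₂.ne', sub_eq_zero] using And.intro h6 h7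
  obtain ⟨xb, hxb⟩ : ∃ xb, xb = xs - σ • (ContinuousLinearMap.adjoint K) ys := ⟨_, rfl⟩
  obtain ⟨yb, hyb⟩ : ∃ yb, yb = ys + τ • K xs := ⟨_, rfl⟩
  rw [← hxb, ← hyb]
  have hp : ∀ k, σ * γ₁ * ‖u (k + 1) - xs‖ ^ 2
      ≤ ⟪(ub k - xb) - (u (k + 1) - xs), u (k + 1) - xs⟫ := by
    intro k
    have h := mul_le_mul_of_nonneg_left (ediff_strong_mono hFp hF (hiter k).1 hξ) hσ.le
    have e : (ub k - xb) - (u (k + 1) - xs)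
        = σ • (σ⁻¹ • (ub k - u (k + 1)) - -(ContinuousLinearMap.adjoint K) ys) := by
      rw [smul_sub, smul_inv_smul₀ hσ.ne', hxb]; module
    rw [e, real_inner_smul_left]
    linarith
  have hq : ∀ k, σ * γ₁ * ‖v (k + 1) - ys‖ ^ 2
      ≤ ⟪(vb k - yb) - (v (k + 1) - ys), v (k + 1) - ys⟫ := by
    intro k
    have h := mul_le_mul_of_nonneg_left (ediff_strong_mono hGp hG (hiter k).2.1 hζ) hτ.le
    have e : (vb k - yb) - (v (k + 1) - ys)
        = τ • (τ⁻¹ • (vb k - v (k + 1)) - K xs) := by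
      rw [smul_sub, smul_inv_smul₀ hτ.ne', hyb]; module
    rw [e, real_inner_smul_left, hστ]
    linarith
  obtain ⟨ρ, hρ0, hρθ, hρ⟩ := contraction hα hθ0 hθ1
  have hstep : ∀ k, ‖ub (k + 1) - xb‖ ^ 2 / σ + ‖vb (k + 1) - yb‖ ^ 2 / τ
      ≤ ρ * (‖ub k - xb‖ ^ 2 / σ + ‖vb k - yb‖ ^ 2 / τ) := by
    intro k
    have h := descent K hσ hτ hμ hα hθ1 hα' (hp k) (hq k)
      (a' := ub (k + 1) - xb) (b' := vb (k + 1) - yb)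
      (by
        rw [sub_sub_sub_cancel_right]
        nth_rewrite 1 [(hiter k).2.2.1]
        rw [hxb]
        simp only [map_add, map_sub]
        module)
      (by
        rw [sub_sub_sub_cancel_right]
        nth_rewrite 1 [(hiter k).2.2.2]
        rw [hyb]
        simp only [map_add, map_sub]
        module)
    refine hρ _ _ _ h ?_
    have h1 := div_le_div_of_nonneg_right (sq_le_step (σ * γ) (ub k - xb) (ub (k + 1) - xb)) hσ.le
    have h2 := div_le_div_of_nonneg_right (sq_le_step (σ * γ) (vb k - yb) (vb (k + 1) - yb)) hτ.le
    rw [add_div, mul_div_assoc, mul_div_assoc (σ * γ * _), mul_div_assoc (2 + _)] at h1 h2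
    linarith
  obtain ⟨N₀, hN₀⟩ : ∃ N₀, N₀ = ‖ub 0 - xb‖ ^ 2 / σ + ‖vb 0 - yb‖ ^ 2 / τ := ⟨_, rfl⟩
  have hN : ∀ k, ‖ub k - xb‖ ^ 2 / σ + ‖vb k - yb‖ ^ 2 / τ ≤ ρ ^ k * N₀ := by
    intro k
    induction k with
    | zero => simp [hN₀]
    | succ k ih =>
      calc _ ≤ _ := hstep k
        _ ≤ ρ * (ρ ^ k * N₀) := mul_le_mul_of_nonneg_left ih hρ0
        _ = ρ ^ (k + 1) * N₀ := by ring
  have hub : Tendsto (fun k : ℕ => ‖ub k - xb‖ ^ 2 / θ ^ k) atTop (nhds 0) := by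
    refine tendsto_div_pow_of_le (C := σ) (r := N₀) hρ0 hρθ (fun k => by positivity) (fun k => ?_)
    rw [← div_le_iff₀' hσ]
    exact (le_add_of_nonneg_right (by positivity)).trans (hN k)
  have hvb : Tendsto (fun k : ℕ => ‖vb k - yb‖ ^ 2 / θ ^ k) atTop (nhds 0) := by
    refine tendsto_div_pow_of_le (C := τ) (r := N₀) hρ0 hρθ (fun k => by positivity) (fun k => ?_)
    rw [← div_le_iff₀' hτ]
    exact (le_add_of_nonneg_left (by positivity)).trans (hN k)
  have hu := tendsto_div_pow_shift hθ0 (fun k => norm_le_of_mono hμ.le (hp k)) hub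
  have hv := tendsto_div_pow_shift hθ0 (fun k => norm_le_of_mono hμ.le (hq k)) hvb
  exact ⟨huniq, tendsto_of_div_pow hθ0 hθle hu, tendsto_of_div_pow hθ0 hθle hv, hu, hv,
    tendsto_of_div_pow hθ0 hθle hub, tendsto_of_div_pow hθ0 hθle hvb, hub, hvb⟩

end
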